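/- arXiv:1608.08184 — 2 statements merged into one kernel-verified Lean document; each statement's English description precedes it below -/
import Mathlib

section
/- Let p ≥ 2 be an integer and define the polynomials ψ_0 := (L_1 + L_0)/√2, ψ_k := (L_{k+1} − L_{k−1})/√(4k+2) for 1 ≤ k ≤ p−1, and ψ_p := (L_p − L_{p−1})/√(4p+2). Then (I ψ_k)' = √(k + 1/2) · L_k for every k = 0, …, p, and consequently ∫_{−1}^{1} (I ψ_k)'(I ψ_j)' ds = δ_{kj} for all 0 ≤ k, j ≤ p. -/
/-!
Write `L_n = w_n^{(n)}` with `w_n = (X² − 1)ⁿ / (2ⁿ n!)`. From `w_{n+1}' = X w_n` one gets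
`w_{n+2}'' = (2n + 3) w_{n+1} + w_n`, whose `(n + 1)`-st derivative is
`L_{n+2}' − L_n' = (2n + 3) L_{n+1}`. For `0 < k` the operator `I` makes a multiple of
`L_{k+1} − L_{k−1}` out of `ψ_k`: either `ψ_k` is already of that form and vanishes at `−1`, so that
`I` fixes it, or `k = p` and the correction term replaces `L_p` by `L_{p+1}`. Orthogonality follows
by integrating Rodrigues' formula by parts `n` times, as `w_n` vanishes to order `n` at `±1`; hence
`(2n + 3) ∫ L_{n+1}² = ∫ L_{n+1} (L_{n+2}' − L_n')` reduces to the boundary term of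
`∫ L_{n+1} L_{n+2}'`.
-/

open Polynomial

/-- The `k`-th Legendre polynomial (Rodrigues' formula), normalized so that `L_k(1) = 1`
and `∫_{−1}^{1} L_k L_j ds = 2δ_{kj}/(2k+1)`. -/
noncomputable def legendre (k : ℕ) : Polynomial ℝ :=
  ((2 ^ k * (Nat.factorial k) : ℝ))⁻¹ •
    ((fun q => Polynomial.derivative q)^[k] ((Polynomial.X ^ 2 - 1) ^ k))

/-- The reconstruction operator `I : P_p → P_{p+1}`,
`I v := v − v(−1)·(−1)^p (L_p − L_{p+1})/2`. -/
noncomputable def recon (p : ℕ) (v : Polynomial ℝ) : Polynomial ℝ :=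
  v - (v.eval (-1) * (-1 : ℝ) ^ p / 2) • (legendre p - legendre (p + 1))

/-- The basis polynomials `ψ_0 := (L_1 + L_0)/√2`,
`ψ_k := (L_{k+1} − L_{k−1})/√(4k+2)` for `1 ≤ k ≤ p−1`, and
`ψ_p := (L_p − L_{p−1})/√(4p+2)`. -/
noncomputable def psi (p k : ℕ) : Polynomial ℝ :=
  if k = 0 then (Real.sqrt 2)⁻¹ • (legendre 1 + legendre 0)
  else if k = p then (Real.sqrt (4 * (p : ℝ) + 2))⁻¹ • (legendre p - legendre (p - 1))
  else (Real.sqrt (4 * (k : ℝ) + 2))⁻¹ • (legendre (k + 1) - legendre (k - 1))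

section IntegrationByParts

variable (f g : ℝ[X]) (a b : ℝ)

lemma integral_eval_mul_eval_derivative :
    ∫ s in a..b, f.eval s * (derivative g).eval s =
      f.eval b * g.eval b - f.eval a * g.eval a - ∫ s in a..b, (derivative f).eval s * g.eval s :=
  intervalIntegral.integral_mul_deriv_eq_deriv_mul
    (fun x _ => f.hasDerivAt x) (fun x _ => g.hasDerivAt x)
    ((derivative f).continuous.intervalIntegrable a b)
    ((derivative g).continuous.intervalIntegrable a b)

variable {g a b}

lemma integral_eval_mul_eval_iterate_derivative {n : ℕ}
    (ha : ∀ j < n, (derivative^[j] g).eval a = 0) (hb : ∀ j < n, (derivative^[j] g).eval b = 0) :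
    ∫ s in a..b, f.eval s * (derivative^[n] g).eval s =
      (-1) ^ n * ∫ s in a..b, (derivative^[n] f).eval s * g.eval s := by
  induction n generalizing f with
  | zero => simp
  | succ n ih =>
    rw [Function.iterate_succ_apply', integral_eval_mul_eval_derivative, ha n n.lt_succ_self,
      hb n n.lt_succ_self, ih _ (fun j hj => ha j (hj.trans n.lt_succ_self))
        (fun j hj => hb j (hj.trans n.lt_succ_self)), ← Function.iterate_succ_apply]
    ring

end IntegrationByParts

/-- The polynomial `w_n = (X² - 1)ⁿ / (2ⁿ n!)`, whose `n`-th derivative is the Legendre polynomial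
`L_n` (Rodrigues' formula). Including the normalization makes `w_{n+1}' = X w_n` free of
constants. -/
noncomputable def rodrigues (n : ℕ) : ℝ[X] :=
  (2 ^ n * n.factorial : ℝ)⁻¹ • (X ^ 2 - 1) ^ n

lemma legendre_eq_iterate_derivative (n : ℕ) : legendre n = derivative^[n] (rodrigues n) :=
  (iterate_derivative_smul _ _ _).symm

lemma natDegree_rodrigues_le (n : ℕ) : (rodrigues n).natDegree ≤ 2 * n := by
  have h : (X ^ 2 - 1 : ℝ[X]).natDegree ≤ 2 := by compute_degree
  calc (rodrigues n).natDegree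
      ≤ ((X ^ 2 - 1 : ℝ[X]) ^ n).natDegree := natDegree_smul_le _ _
    _ ≤ n * 2 := natDegree_pow_le_of_le n h
    _ = 2 * n := mul_comm n 2

lemma natDegree_legendre_le (n : ℕ) : (legendre n).natDegree ≤ n := by
  rw [legendre_eq_iterate_derivative]
  have := natDegree_iterate_derivative (rodrigues n) n
  have := natDegree_rodrigues_le n
  lia

lemma natDegree_derivative_legendre_lt {m n : ℕ} (h : m ≤ n) (hn : 0 < n) :
    (derivative (legendre m)).natDegree < n := by
  have := natDegree_derivative_le (legendre m)
  have := natDegree_legendre_le m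
  lia

lemma derivative_rodrigues_succ (n : ℕ) :
    derivative (rodrigues (n + 1)) = X * rodrigues n := by
  have h : derivative ((X ^ 2 - 1 : ℝ[X]) ^ (n + 1)) =
      (2 * (n + 1) : ℝ) • (X * (X ^ 2 - 1) ^ n) := by
    simp only [derivative_pow_succ, derivative_sub, derivative_X, derivative_one, smul_eq_C_mul,
      map_mul, map_add, map_natCast, map_one, map_ofNat]
    ring
  rw [rodrigues, rodrigues, derivative_smul, h, smul_smul, mul_smul_comm]
  congr 1
  rw [Nat.factorial_succ, pow_succ]
  push_cast
  field_simp

lemma X_sq_sub_one_mul_rodrigues (n : ℕ) :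
    (X ^ 2 - 1) * rodrigues n = (2 * (n + 1) : ℝ) • rodrigues (n + 1) := by
  rw [rodrigues, rodrigues, smul_smul, mul_smul_comm, ← pow_succ']
  congr 1
  rw [Nat.factorial_succ, pow_succ]
  push_cast
  field_simp

lemma derivative_derivative_rodrigues_add_two (n : ℕ) :
    derivative (derivative (rodrigues (n + 2))) =
      (2 * n + 3 : ℝ) • rodrigues (n + 1) + rodrigues n :=
  calc derivative (derivative (rodrigues (n + 2)))
      = rodrigues (n + 1) + X * (X * rodrigues n) := by
        simp [derivative_rodrigues_succ]
    _ = rodrigues (n + 1) + ((X ^ 2 - 1) * rodrigues n + rodrigues n) := by ring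
    _ = (2 * n + 3 : ℝ) • rodrigues (n + 1) + rodrigues n := by
        rw [X_sq_sub_one_mul_rodrigues]
        module

lemma derivative_legendre_add_two_sub (n : ℕ) :
    derivative (legendre (n + 2) - legendre n) = (2 * n + 3 : ℝ) • legendre (n + 1) := by
  have h : derivative (legendre (n + 2)) =
      (2 * n + 3 : ℝ) • legendre (n + 1) + derivative (legendre n) :=
    calc derivative (legendre (n + 2))
        = derivative^[n + 1] (derivative (derivative (rodrigues (n + 2)))) := by
          rw [legendre_eq_iterate_derivative, ← Function.iterate_succ_apply' derivative,
            ← Function.iterate_succ_apply, ← Function.iterate_succ_apply]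
      _ = (2 * n + 3 : ℝ) • legendre (n + 1) + derivative (legendre n) := by
          rw [derivative_derivative_rodrigues_add_two, iterate_map_add,
            iterate_derivative_smul, Function.iterate_succ_apply' derivative n (rodrigues n),
            legendre_eq_iterate_derivative, legendre_eq_iterate_derivative]
  rw [derivative_sub, h, add_sub_cancel_right]

lemma legendre_zero : legendre 0 = 1 := by
  simp [legendre]

lemma legendre_one : legendre 1 = X :=
  calc legendre 1 = derivative (rodrigues 1) := legendre_eq_iterate_derivative 1
    _ = X * rodrigues 0 := derivative_rodrigues_succ 0
    _ = X := by simp [rodrigues]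

section Endpoints

variable {x : ℝ} (hx : x ^ 2 = 1)
include hx

lemma rodrigues_eq_X_sub_C_pow_mul (n : ℕ) :
    rodrigues n = (X - C x) ^ n * ((2 ^ n * n.factorial : ℝ)⁻¹ • (X + C x) ^ n) := by
  have h : (X ^ 2 - 1 : ℝ[X]) = (X - C x) * (X + C x) := by
    rw [← C_1, ← hx, C_pow]
    ring
  rw [rodrigues, h, mul_pow, mul_smul_comm]

lemma eval_iterate_derivative_rodrigues_eq_zero {n j : ℕ} (hj : j < n) :
    (derivative^[j] (rodrigues n)).eval x = 0 :=
  aeval_iterate_derivative_of_lt (rodrigues n) n x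
    (map_id.trans (rodrigues_eq_X_sub_C_pow_mul hx n)) hj

lemma eval_legendre_of_sq_eq_one (n : ℕ) : (legendre n).eval x = x ^ n :=
  calc (legendre n).eval x
      = n.factorial • ((2 ^ n * n.factorial : ℝ)⁻¹ • (X + C x) ^ n).eval x := by
        rw [legendre_eq_iterate_derivative]
        exact aeval_iterate_derivative_self (rodrigues n) n x
          (map_id.trans (rodrigues_eq_X_sub_C_pow_mul hx n))
    _ = n.factorial * ((2 ^ n * n.factorial : ℝ)⁻¹ * (2 * x) ^ n) := by
        simp [two_mul]
    _ = x ^ n := by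
        rw [mul_pow]
        field_simp

end Endpoints

lemma eval_one_legendre (n : ℕ) : (legendre n).eval 1 = 1 := by
  simpa using eval_legendre_of_sq_eq_one (one_pow 2) n

lemma eval_neg_one_legendre (n : ℕ) : (legendre n).eval (-1) = (-1) ^ n :=
  eval_legendre_of_sq_eq_one neg_one_sq n

lemma integral_eval_mul_legendre_eq_zero {f : ℝ[X]} {n : ℕ} (hf : f.natDegree < n) :
    ∫ s in (-1 : ℝ)..1, f.eval s * (legendre n).eval s = 0 := by
  rw [legendre_eq_iterate_derivative, integral_eval_mul_eval_iterate_derivative f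
    (fun _ => eval_iterate_derivative_rodrigues_eq_zero neg_one_sq)
    (fun _ => eval_iterate_derivative_rodrigues_eq_zero (one_pow 2)),
    iterate_derivative_eq_zero hf]
  simp

lemma integral_legendre_mul_legendre_of_ne {k j : ℕ} (h : k ≠ j) :
    ∫ s in (-1 : ℝ)..1, (legendre k).eval s * (legendre j).eval s = 0 := by
  rcases h.lt_or_gt with hkj | hjk
  · exact integral_eval_mul_legendre_eq_zero ((natDegree_legendre_le k).trans_lt hkj)
  · simp_rw [mul_comm (eval _ (legendre k))]
    exact integral_eval_mul_legendre_eq_zero ((natDegree_legendre_le j).trans_lt hjk)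

lemma integral_legendre_mul_derivative_legendre_succ (n : ℕ) :
    ∫ s in (-1 : ℝ)..1, (legendre n).eval s * (derivative (legendre (n + 1))).eval s = 2 := by
  have sign : (-1 : ℝ) ^ n * (-1) ^ (n + 1) = -1 := by
    rw [pow_succ, ← mul_assoc, ← mul_pow]
    simp
  rw [integral_eval_mul_eval_derivative, eval_one_legendre, eval_one_legendre,
    eval_neg_one_legendre, eval_neg_one_legendre, sign, integral_eval_mul_legendre_eq_zero
      (natDegree_derivative_legendre_lt n.le_succ n.succ_pos)]
  norm_num

lemma integral_legendre_mul_self (n : ℕ) :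
    ∫ s in (-1 : ℝ)..1, (legendre n).eval s * (legendre n).eval s = 2 / (2 * n + 1) := by
  rcases n with _ | n
  · norm_num [legendre_zero]
  have scaled : (2 * n + 3 : ℝ) * ∫ s in (-1 : ℝ)..1,
      (legendre (n + 1)).eval s * (legendre (n + 1)).eval s = 2 :=
    calc (2 * n + 3 : ℝ) * ∫ s in (-1 : ℝ)..1,
          (legendre (n + 1)).eval s * (legendre (n + 1)).eval s
        = ∫ s in (-1 : ℝ)..1, (legendre (n + 1)).eval s *
            (derivative (legendre (n + 2) - legendre n)).eval s := by
          simp_rw [derivative_legendre_add_two_sub, eval_smul, smul_eq_mul, mul_left_comm,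
            intervalIntegral.integral_const_mul]
      _ = (∫ s in (-1 : ℝ)..1,
            (legendre (n + 1)).eval s * (derivative (legendre (n + 2))).eval s) -
          ∫ s in (-1 : ℝ)..1, (derivative (legendre n)).eval s * (legendre (n + 1)).eval s := by
          rw [← intervalIntegral.integral_sub
            ((by fun_prop : Continuous _).intervalIntegrable _ _)
            ((by fun_prop : Continuous _).intervalIntegrable _ _)]
          simp_rw [derivative_sub, eval_sub, mul_sub, mul_comm]
      _ = 2 := by
          rw [integral_legendre_mul_derivative_legendre_succ, integral_eval_mul_legendre_eq_zero
            (natDegree_derivative_legendre_lt n.le_succ n.succ_pos), sub_zero]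
  rw [eq_div_iff (by positivity)]
  push_cast
  linear_combination scaled

lemma recon_smul (p : ℕ) (c : ℝ) (v : ℝ[X]) : recon p (c • v) = c • recon p v := by
  simp only [recon, eval_smul, smul_eq_mul, smul_sub, smul_smul, mul_assoc, mul_div_assoc]

lemma recon_eq_self {v : ℝ[X]} (hv : v.eval (-1) = 0) (p : ℕ) : recon p v = v := by
  simp [recon, hv]

lemma recon_legendre_succ_sub (n : ℕ) :
    recon (n + 1) (legendre (n + 1) - legendre n) = legendre (n + 2) - legendre n := by
  have h : ((-1 : ℝ) ^ (n + 1) - (-1) ^ n) * (-1) ^ (n + 1) / 2 = 1 := by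
    rcases neg_one_pow_eq_or ℝ n with hn | hn <;> norm_num [pow_succ, hn]
  rw [recon, eval_sub, eval_neg_one_legendre, eval_neg_one_legendre, h]
  module

lemma recon_psi_zero (p : ℕ) : recon p (psi p 0) = (√2)⁻¹ • (X + 1) := by
  rw [psi, if_pos rfl, recon_smul, legendre_one, legendre_zero, recon_eq_self (by simp)]

lemma recon_psi_succ (p n : ℕ) :
    recon p (psi p (n + 1)) =
      (√(4 * (n + 1 : ℕ) + 2))⁻¹ • (legendre (n + 2) - legendre n) := by
  rw [psi, if_neg n.succ_ne_zero, Nat.add_sub_cancel]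
  split_ifs with hp
  · rw [← hp, recon_smul, Nat.add_sub_cancel, recon_legendre_succ_sub]
  · have h : (legendre (n + 2) - legendre n).eval (-1) = 0 := by
      simp [eval_neg_one_legendre, pow_add]
    rw [recon_smul, recon_eq_self h]

lemma inv_sqrt_four_mul_mul_two_mul (x : ℝ) : (√(4 * x))⁻¹ * (2 * x) = √x := by
  have h : √(4 * x) = 2 * √x := by
    rw [Real.sqrt_mul (by norm_num), show (4 : ℝ) = 2 ^ 2 by norm_num,
      Real.sqrt_sq (by norm_num)]
  rw [h, inv_mul_eq_div, mul_div_mul_left x _ two_ne_zero, Real.div_sqrt]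

lemma derivative_recon_psi (p k : ℕ) :
    derivative (recon p (psi p k)) = √(k + 1 / 2) • legendre k := by
  rcases k with _ | n
  · simp [recon_psi_zero, legendre_zero]
  · have h₄ : (4 * (n + 1 : ℕ) + 2 : ℝ) = 4 * ((n + 1 : ℕ) + 1 / 2) := by ring
    have h₂ : (2 * n + 3 : ℝ) = 2 * ((n + 1 : ℕ) + 1 / 2) := by
      push_cast
      ring
    rw [recon_psi_succ, derivative_smul, derivative_legendre_add_two_sub, smul_smul, h₄, h₂,
      inv_sqrt_four_mul_mul_two_mul]

theorem psi_recon_deriv_general (p : ℕ) :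
    (∀ k, derivative (recon p (psi p k)) = √(k + 1 / 2) • legendre k) ∧
      ∀ k j, ∫ s in (-1 : ℝ)..1, (derivative (recon p (psi p k))).eval s *
        (derivative (recon p (psi p j))).eval s = if k = j then 1 else 0 := by
  refine ⟨derivative_recon_psi p, fun k j => ?_⟩
  have factor : ∫ s in (-1 : ℝ)..1, (derivative (recon p (psi p k))).eval s *
      (derivative (recon p (psi p j))).eval s = √(k + 1 / 2) * √(j + 1 / 2) *
        ∫ s in (-1 : ℝ)..1, (legendre k).eval s * (legendre j).eval s := by
    rw [← intervalIntegral.integral_const_mul]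
    refine intervalIntegral.integral_congr fun s _ => ?_
    simp only [derivative_recon_psi, eval_smul, smul_eq_mul]
    ring
  rw [factor]
  split_ifs with h
  · rw [h, integral_legendre_mul_self, Real.mul_self_sqrt (by positivity)]
    field_simp
  · rw [integral_legendre_mul_legendre_of_ne h, mul_zero]

/-- **Lemma (orthonormal basis via the reconstruction).** For `p ≥ 2`, the polynomials `ψ_k`
satisfy `(I ψ_k)' = √(k + 1/2) · L_k` for every `k = 0, …, p`, and consequently
`∫_{−1}^{1} (I ψ_k)'(I ψ_j)' ds = δ_{kj}` for all `0 ≤ k, j ≤ p`. -/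
theorem psi_recon_deriv (p : ℕ) (hp : 2 ≤ p) :
    (∀ k ≤ p, Polynomial.derivative (recon p (psi p k))
        = Real.sqrt ((k : ℝ) + 1 / 2) • legendre k) ∧
      ∀ k ≤ p, ∀ j ≤ p,
        (∫ s in (-1 : ℝ)..1,
            (Polynomial.derivative (recon p (psi p k))).eval s *
              (Polynomial.derivative (recon p (psi p j))).eval s)
          = if k = j then 1 else 0 :=
  ⟨fun k _ => (psi_recon_deriv_general p).1 k, fun k _ j _ => (psi_recon_deriv_general p).2 k j⟩
end

section
/- There exists a constant C > 0, independent of p, such that for every integer p ≥ 0 and every polynomial v of degree at most p, ‖(I v)'‖_{L²(−1,1)} ≤ C (p+1)² ‖v‖_{L²(−1,1)}. -/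
open Polynomial

/-!
Expand `v` in the Legendre basis. Weighted Cauchy–Schwarz bounds every linear functional `ℓ` on
polynomials of degree less than `n` by `ℓ(v)² ≤ ‖v‖² ∑_{k<n} ℓ(L_k)² / ‖L_k‖²`. Taking for `ℓ` the
evaluation at `-1` gives the trace inequality `v(-1)² ≤ n²/2 ‖v‖²`; taking `ℓ(v) = v'(s)` and
integrating over `s` gives the inverse inequality `‖v'‖² ≤ n²(n² - 1)/4 ‖v‖²`. Since `L_p'` and
`L_{p+1}'` are orthogonal, the correction term of `I v` has a derivative of squared norm exactly
`(p+1)²/2 · v(-1)²`. With `n = p + 1` these estimates combine to the constant `C = 1`.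
-/

section OrthogonalFamily

theorem bilin_sum_smul_self_of_isOrthoᵢ {R M ι : Type*} [CommSemiring R] [AddCommMonoid M]
    [Module R M] {B : LinearMap.BilinForm R M} {e : ι → M} (he : B.IsOrthoᵢ e) (s : Finset ι)
    (c : ι → R) :
    B (∑ i ∈ s, c i • e i) (∑ i ∈ s, c i • e i) = ∑ i ∈ s, c i ^ 2 * B (e i) (e i) := by
  simp only [map_sum, LinearMap.sum_apply, map_smul, LinearMap.smul_apply, smul_eq_mul]
  refine Finset.sum_congr rfl fun i hi => ?_
  rw [Finset.sum_eq_single_of_mem i hi fun j _ hji => by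
    simp only [show B (e j) (e i) = 0 from he hji, mul_zero]]
  ring

theorem sq_apply_le_mul_sum_of_mem_span {𝕜 M ι : Type*} [Field 𝕜] [LinearOrder 𝕜]
    [IsStrictOrderedRing 𝕜] [AddCommGroup M] [Module 𝕜 M] {B : LinearMap.BilinForm 𝕜 M}
    {e : ι → M} (he : B.IsOrthoᵢ e) {s : Finset ι} (hpos : ∀ i ∈ s, 0 < B (e i) (e i)) {v : M}
    (hv : v ∈ Submodule.span 𝕜 (e '' s)) (ℓ : M →ₗ[𝕜] 𝕜) :
    ℓ v ^ 2 ≤ B v v * ∑ i ∈ s, ℓ (e i) ^ 2 / B (e i) (e i) := by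
  obtain ⟨c, rfl⟩ := (Submodule.mem_span_image_finset_iff_exists_fun' 𝕜).mp hv
  rw [bilin_sum_smul_self_of_isOrthoᵢ he, map_sum]
  simp only [map_smul, smul_eq_mul]
  refine Finset.sum_sq_le_sum_mul_sum_of_sq_le_mul s
    (fun i hi => mul_nonneg (sq_nonneg _) (hpos i hi).le)
    (fun i hi => div_nonneg (sq_nonneg _) (hpos i hi).le) fun i hi => le_of_eq ?_
  have := (hpos i hi).ne'
  field_simp

end OrthogonalFamily

section Integral

/-- The integral `∫ₐᵇ q(s) ds` of a polynomial, as a linear functional of `q`. -/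
noncomputable def polyIntegral (a b : ℝ) : ℝ[X] →ₗ[ℝ] ℝ where
  toFun q := ∫ s in a..b, q.eval s
  map_add' q r := by
    simp only [eval_add]
    exact intervalIntegral.integral_add (q.continuous.intervalIntegrable a b)
      (r.continuous.intervalIntegrable a b)
  map_smul' c q := by
    simp only [eval_smul, smul_eq_mul, RingHom.id_apply, intervalIntegral.integral_const_mul]

variable {a b : ℝ}

theorem polyIntegral_apply (q : ℝ[X]) : polyIntegral a b q = ∫ s in a..b, q.eval s := rfl

theorem polyIntegral_C_mul (c : ℝ) (q : ℝ[X]) :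
    polyIntegral a b (C c * q) = c * polyIntegral a b q := by
  rw [← smul_eq_C_mul, map_smul, smul_eq_mul]

theorem polyIntegral_mono (hab : a ≤ b) {q r : ℝ[X]}
    (h : ∀ s ∈ Set.Icc a b, q.eval s ≤ r.eval s) : polyIntegral a b q ≤ polyIntegral a b r :=
  intervalIntegral.integral_mono_on hab (q.continuous.intervalIntegrable a b)
    (r.continuous.intervalIntegrable a b) h

theorem polyIntegral_sq_nonneg (hab : a ≤ b) (q : ℝ[X]) : 0 ≤ polyIntegral a b (q ^ 2) :=
  intervalIntegral.integral_nonneg hab fun s _ => by rw [eval_pow]; exact sq_nonneg _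

theorem polyIntegral_sub_sq_le (hab : a ≤ b) (q r : ℝ[X]) :
    polyIntegral a b ((q - r) ^ 2) ≤
      2 * (polyIntegral a b (q ^ 2) + polyIntegral a b (r ^ 2)) := by
  rw [← map_add, ← polyIntegral_C_mul]
  refine polyIntegral_mono hab fun s _ => ?_
  simp only [eval_pow, eval_sub, eval_mul, eval_C, eval_add]
  linarith [sq_nonneg (q.eval s + r.eval s)]

theorem polyIntegral_derivative (q : ℝ[X]) :
    polyIntegral a b (derivative q) = q.eval b - q.eval a :=
  intervalIntegral.integral_eq_sub_of_hasDerivAt (fun s _ => q.hasDerivAt s)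
    ((derivative q).continuous.intervalIntegrable a b)

theorem polyIntegral_derivative_mul (q r : ℝ[X]) :
    polyIntegral a b (derivative q * r) =
      q.eval b * r.eval b - q.eval a * r.eval a - polyIntegral a b (q * derivative r) := by
  rw [eq_sub_iff_add_eq, ← map_add, ← derivative_mul, polyIntegral_derivative, eval_mul, eval_mul]

theorem polyIntegral_iterate_derivative_mul {k : ℕ} {q : ℝ[X]}
    (ha : ∀ j < k, (derivative^[j] q).eval a = 0) (hb : ∀ j < k, (derivative^[j] q).eval b = 0)
    (r : ℝ[X]) :
    polyIntegral a b (derivative^[k] q * r) =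
      (-1) ^ k * polyIntegral a b (q * derivative^[k] r) := by
  induction k generalizing r with
  | zero => simp only [Function.iterate_zero, id_eq, pow_zero, one_mul]
  | succ k ih =>
    rw [Function.iterate_succ_apply', polyIntegral_derivative_mul, ha k k.lt_succ_self,
      hb k k.lt_succ_self, ih (fun j hj => ha j (hj.trans k.lt_succ_self))
        (fun j hj => hb j (hj.trans k.lt_succ_self)), Function.iterate_succ_apply]
    ring

end Integral

section Derivatives

theorem natDegree_iterate_derivative_eq {R : Type*} [Semiring R] [IsAddTorsionFree R] (q : R[X])
    (k : ℕ) : (derivative^[k] q).natDegree = q.natDegree - k := by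
  induction k with
  | zero => rfl
  | succ k ih => rw [Function.iterate_succ_apply', natDegree_derivative, ih, Nat.sub_sub]

theorem eval_iterate_derivative_eq_factorial_mul {R : Type*} [Semiring R] (a : R) (j : ℕ)
    (q : R[X]) :
    (derivative^[j] q).eval a = (j.factorial : R) * (taylor a q).coeff j := by
  rw [taylor_coeff, ← factorial_smul_hasseDeriv, LinearMap.smul_apply, eval_smul, nsmul_eq_mul]

variable {R : Type*} [CommRing R]

theorem eval_iterate_derivative_X_sub_C_pow_mul (a : R) (k j : ℕ) (q : R[X]) :
    (derivative^[j + k] ((X - C a) ^ k * q)).eval a =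
      ((j + k).factorial : R) * (taylor a q).coeff j := by
  rw [eval_iterate_derivative_eq_factorial_mul, taylor_mul, taylor_pow, map_sub, taylor_X,
    taylor_C, add_sub_cancel_right, coeff_X_pow_mul]

theorem degree_X_mul_derivative_sub_lt {k : ℕ} {q : R[X]} (hq : q.degree ≤ k) :
    (X * derivative q - C (k : R) * q).degree < (k : WithBot ℕ) := by
  rw [degree_lt_iff_coeff_zero]
  intro m hkm
  have coeff_X_mul_derivative : (X * derivative q).coeff m = m * q.coeff m := by
    cases m with
    | zero => simp
    | succ m => rw [coeff_X_mul, coeff_derivative]; push_cast; ring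
  rw [coeff_sub, coeff_C_mul, coeff_X_mul_derivative]
  rcases hkm.eq_or_lt with rfl | hkm
  · exact sub_self _
  · rw [coeff_eq_zero_of_degree_lt (hq.trans_lt (by exact_mod_cast hkm)), mul_zero, mul_zero,
      sub_zero]

theorem X_sq_sub_one_pow_eq {a : R} (ha : a ^ 2 = 1) (k : ℕ) :
    ((X ^ 2 - 1) ^ k : R[X]) = (X - C a) ^ k * (X + C a) ^ k := by
  rw [← mul_pow, ← C_1, ← ha, C_pow]
  ring

theorem eval_iterate_derivative_X_sq_sub_one_pow_eq_zero {a : R}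
    (ha : a ^ 2 = 1) {j k : ℕ} (hjk : j < k) :
    (derivative^[j] ((X ^ 2 - 1 : R[X]) ^ k)).eval a = 0 := by
  refine eval_eq_zero_of_dvd_of_eval_eq_zero
    (pow_sub_dvd_iterate_derivative_pow (X ^ 2 - 1 : R[X]) k j) ?_
  simp [ha, (Nat.sub_pos_of_lt hjk).ne']

end Derivatives

section Legendre

theorem legendre_eq_smul_iterate_derivative (k : ℕ) :
    legendre k = ((2 ^ k * k.factorial : ℝ))⁻¹ • derivative^[k] ((X ^ 2 - 1) ^ k) := rfl

theorem eval_legendre_of_sq_eq_one_s15 {a : ℝ} (ha : a ^ 2 = 1) (k : ℕ) :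
    (legendre k).eval a = a ^ k := by
  have h := eval_iterate_derivative_X_sub_C_pow_mul a k 0 ((X + C a) ^ k)
  rw [zero_add, taylor_coeff_zero, ← X_sq_sub_one_pow_eq ha] at h
  rw [legendre_eq_smul_iterate_derivative, eval_smul, h, smul_eq_mul, eval_pow, eval_add, eval_X,
    eval_C, ← two_mul, mul_pow]
  field_simp

theorem eval_derivative_legendre_of_sq_eq_one {a : ℝ} (ha : a ^ 2 = 1) (k : ℕ) :
    (derivative (legendre k)).eval a = a ^ (k + 1) * (k * (k + 1) / 2) := by
  have h := eval_iterate_derivative_X_sub_C_pow_mul a k 1 ((X + C a) ^ k)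
  rw [taylor_coeff_one, ← X_sq_sub_one_pow_eq ha, add_comm 1 k,
    Function.iterate_succ_apply'] at h
  rw [legendre_eq_smul_iterate_derivative, derivative_smul, eval_smul, h, smul_eq_mul,
    derivative_X_add_C_pow, eval_mul, eval_C, eval_pow, eval_add, eval_X, eval_C, ← two_mul]
  cases k with
  | zero => simp
  | succ k =>
    have hpow : a ^ (k + 1 + 1) = a ^ k := by
      rw [add_assoc, pow_add, one_add_one_eq_two, ha, mul_one]
    rw [hpow, Nat.add_sub_cancel, mul_pow, Nat.factorial_succ (k + 1)]
    push_cast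
    field_simp
    ring

theorem legendre_ne_zero (k : ℕ) : legendre k ≠ 0 := by
  intro h
  simpa [h] using eval_legendre_of_sq_eq_one_s15 (one_pow 2) k

theorem degree_legendre (k : ℕ) : (legendre k).degree = k := by
  have hbase : (X ^ 2 - 1 : ℝ[X]).natDegree = 2 := natDegree_X_pow_sub_C
  rw [degree_eq_natDegree (legendre_ne_zero k), legendre_eq_smul_iterate_derivative,
    natDegree_smul _ (by positivity), natDegree_iterate_derivative_eq, natDegree_pow, hbase,
    mul_two, Nat.add_sub_cancel]

theorem mem_span_legendre {n : ℕ} {v : ℝ[X]} (hv : v.degree < n) :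
    v ∈ Submodule.span ℝ (legendre '' (Finset.range n : Finset ℕ)) := by
  let S : Polynomial.Sequence ℝ := ⟨legendre, degree_legendre⟩
  rw [Finset.coe_range, show legendre = S from rfl,
    S.span_degreeLT fun k _ => (leadingCoeff_ne_zero.mpr (S.ne_zero k)).isUnit]
  exact mem_degreeLT.mpr hv

theorem polyIntegral_legendre_mul_eq_zero {k : ℕ} {q : ℝ[X]} (hq : q.degree < k) :
    polyIntegral (-1) 1 (legendre k * q) = 0 := by
  rw [legendre_eq_smul_iterate_derivative, smul_mul_assoc, map_smul,
    polyIntegral_iterate_derivative_mul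
      (fun _ => eval_iterate_derivative_X_sq_sub_one_pow_eq_zero (by norm_num))
      (fun _ => eval_iterate_derivative_X_sq_sub_one_pow_eq_zero (by norm_num)),
    iterate_derivative_eq_zero_of_degree_lt hq, mul_zero, map_zero, mul_zero, smul_zero]

theorem polyIntegral_legendre_mul_legendre_of_ne {j k : ℕ} (hjk : j ≠ k) :
    polyIntegral (-1) 1 (legendre j * legendre k) = 0 := by
  wlog hlt : j < k generalizing j k
  · rw [mul_comm]
    exact this hjk.symm (hjk.lt_or_gt.resolve_left hlt)
  rw [mul_comm]
  exact polyIntegral_legendre_mul_eq_zero (by rw [degree_legendre]; exact_mod_cast hlt)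

theorem polyIntegral_legendre_sq (k : ℕ) :
    polyIntegral (-1) 1 (legendre k ^ 2) = 2 / (2 * k + 1) := by
  set L := legendre k
  have euler : polyIntegral (-1) 1 (L * (X * derivative L - C (k : ℝ) * L)) = 0 :=
    polyIntegral_legendre_mul_eq_zero (degree_X_mul_derivative_sub_lt (degree_legendre k).le)
  have endpoints : polyIntegral (-1) 1 (derivative (X * L ^ 2)) = 2 := by
    rw [polyIntegral_derivative]
    simp only [eval_mul, eval_X, eval_pow, L, eval_legendre_of_sq_eq_one_s15 (one_pow 2),
      eval_legendre_of_sq_eq_one_s15 neg_one_sq, pow_right_comm _ k 2]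
    norm_num
  have expand : derivative (X * L ^ 2) =
      C (2 : ℝ) * (L * (X * derivative L - C (k : ℝ) * L)) + C (2 * k + 1 : ℝ) * L ^ 2 := by
    simp only [derivative_mul, derivative_X, derivative_sq, C_add, C_mul, C_1, C_ofNat]
    ring
  rw [expand, map_add, polyIntegral_C_mul, polyIntegral_C_mul, euler, mul_zero, zero_add]
    at endpoints
  rw [eq_div_iff (by positivity), mul_comm, endpoints]

theorem polyIntegral_derivative_legendre_mul {j k : ℕ} (hjk : j ≤ k) :
    polyIntegral (-1) 1 (derivative (legendre k) * derivative (legendre j)) =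
      (1 + (-1) ^ (j + k)) * (j * (j + 1) / 2) := by
  have hdeg : (derivative (derivative (legendre j))).degree < k :=
    calc (derivative (derivative (legendre j))).degree
        ≤ (derivative (legendre j)).degree := degree_derivative_le
      _ < (legendre j).degree := degree_derivative_lt (legendre_ne_zero j)
      _ ≤ k := by rw [degree_legendre]; exact_mod_cast hjk
  rw [polyIntegral_derivative_mul, polyIntegral_legendre_mul_eq_zero hdeg]
  simp only [eval_legendre_of_sq_eq_one_s15 (one_pow 2), eval_legendre_of_sq_eq_one_s15 neg_one_sq,
    eval_derivative_legendre_of_sq_eq_one (one_pow 2),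
    eval_derivative_legendre_of_sq_eq_one neg_one_sq]
  ring

theorem polyIntegral_derivative_legendre_sq (k : ℕ) :
    polyIntegral (-1) 1 (derivative (legendre k) ^ 2) = k * (k + 1) := by
  rw [sq, polyIntegral_derivative_legendre_mul le_rfl, (Even.add_self k).neg_one_pow]
  ring

theorem polyIntegral_derivative_legendre_sub_succ_sq (k : ℕ) :
    polyIntegral (-1) 1 (derivative (legendre k - legendre (k + 1)) ^ 2) = 2 * (k + 1) ^ 2 := by
  have hodd : (-1 : ℝ) ^ (k + (k + 1)) = -1 := Odd.neg_one_pow ⟨k, by ring⟩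
  have expand : derivative (legendre k - legendre (k + 1)) ^ 2 =
      derivative (legendre k) ^ 2 + derivative (legendre (k + 1)) ^ 2 -
        C 2 * (derivative (legendre (k + 1)) * derivative (legendre k)) := by
    rw [derivative_sub, C_ofNat]
    ring
  rw [expand, map_sub, map_add, polyIntegral_C_mul, polyIntegral_derivative_legendre_sq,
    polyIntegral_derivative_legendre_sq, polyIntegral_derivative_legendre_mul k.le_succ, hodd]
  push_cast
  ring

theorem sq_apply_le_polyIntegral_sq_mul_sum {n : ℕ} {v : ℝ[X]} (hv : v.degree < n)
    (ℓ : ℝ[X] →ₗ[ℝ] ℝ) :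
    ℓ v ^ 2 ≤
      polyIntegral (-1) 1 (v ^ 2) * ∑ k ∈ Finset.range n, (2 * k + 1) / 2 * ℓ (legendre k) ^ 2 := by
  let B : LinearMap.BilinForm ℝ ℝ[X] := (LinearMap.mul ℝ ℝ[X]).compr₂ (polyIntegral (-1) 1)
  have hB (q r : ℝ[X]) : B q r = polyIntegral (-1) 1 (q * r) := rfl
  have hnorm (k : ℕ) : B (legendre k) (legendre k) = 2 / (2 * k + 1) := by
    rw [hB, ← sq, polyIntegral_legendre_sq]
  have hortho : B.IsOrthoᵢ legendre := fun _ _ => polyIntegral_legendre_mul_legendre_of_ne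
  calc ℓ v ^ 2 ≤ B v v * ∑ k ∈ Finset.range n, ℓ (legendre k) ^ 2 / B (legendre k) (legendre k) :=
        sq_apply_le_mul_sum_of_mem_span hortho (fun k _ => by rw [hnorm]; positivity)
          (mem_span_legendre hv) ℓ
    _ = _ := by
        simp only [hnorm, hB, ← sq, div_div_eq_mul_div, mul_comm (ℓ _ ^ 2), mul_div_right_comm]

end Legendre

section InverseInequalities

theorem sum_range_two_mul_add_one_div_two (n : ℕ) :
    ∑ k ∈ Finset.range n, (2 * (k : ℝ) + 1) / 2 = n ^ 2 / 2 := by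
  induction n with
  | zero => simp
  | succ n ih => rw [Finset.sum_range_succ, ih]; push_cast; ring

theorem sum_range_two_mul_add_one_div_two_mul (n : ℕ) :
    ∑ k ∈ Finset.range n, (2 * (k : ℝ) + 1) / 2 * (k * (k + 1)) = n ^ 2 * (n ^ 2 - 1) / 4 := by
  induction n with
  | zero => simp
  | succ n ih => rw [Finset.sum_range_succ, ih]; push_cast; ring

theorem sq_eval_le_mul_polyIntegral_sq {n : ℕ} {v : ℝ[X]} (hv : v.degree < n) {a : ℝ}
    (ha : a ^ 2 = 1) : v.eval a ^ 2 ≤ n ^ 2 / 2 * polyIntegral (-1) 1 (v ^ 2) := by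
  have h := sq_apply_le_polyIntegral_sq_mul_sum hv (leval a)
  simp only [leval_apply, eval_legendre_of_sq_eq_one_s15 ha, pow_right_comm a _ 2, ha, one_pow,
    mul_one, sum_range_two_mul_add_one_div_two] at h
  rwa [mul_comm]

theorem polyIntegral_derivative_sq_le {n : ℕ} {v : ℝ[X]} (hv : v.degree < n) :
    polyIntegral (-1) 1 (derivative v ^ 2) ≤
      n ^ 2 * (n ^ 2 - 1) / 4 * polyIntegral (-1) 1 (v ^ 2) := by
  set N := polyIntegral (-1) 1 (v ^ 2)
  calc polyIntegral (-1) 1 (derivative v ^ 2)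
      ≤ polyIntegral (-1) 1
          (C N * ∑ k ∈ Finset.range n, C ((2 * k + 1) / 2 : ℝ) * derivative (legendre k) ^ 2) := by
        refine polyIntegral_mono (by norm_num) fun s _ => ?_
        have h := sq_apply_le_polyIntegral_sq_mul_sum hv (leval s ∘ₗ derivative)
        simpa only [eval_pow, eval_mul, eval_C, eval_finsetSum, LinearMap.comp_apply,
          leval_apply] using h
    _ = N * ∑ k ∈ Finset.range n, (2 * (k : ℝ) + 1) / 2 * (k * (k + 1)) := by
        simp only [polyIntegral_C_mul, map_sum, polyIntegral_derivative_legendre_sq]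
    _ = n ^ 2 * (n ^ 2 - 1) / 4 * N := by rw [sum_range_two_mul_add_one_div_two_mul, mul_comm]

theorem polyIntegral_derivative_recon_sq_le_add (p : ℕ) (v : ℝ[X]) :
    polyIntegral (-1) 1 (derivative (recon p v) ^ 2) ≤
      2 * (polyIntegral (-1) 1 (derivative v ^ 2) + (p + 1) ^ 2 / 2 * v.eval (-1) ^ 2) := by
  set t := v.eval (-1) * (-1) ^ p / 2 with ht
  have ht_sq : t ^ 2 = v.eval (-1) ^ 2 / 4 := by
    rw [ht, div_pow, mul_pow, pow_right_comm _ p 2, neg_one_sq, one_pow]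
    norm_num
  have hcorrection : polyIntegral (-1) 1
      ((C t * derivative (legendre p - legendre (p + 1))) ^ 2) =
        (p + 1) ^ 2 / 2 * v.eval (-1) ^ 2 := by
    rw [mul_pow, ← C_pow, polyIntegral_C_mul, polyIntegral_derivative_legendre_sub_succ_sq, ht_sq]
    ring
  rw [recon, derivative_sub, smul_eq_C_mul, derivative_C_mul, ← hcorrection]
  exact polyIntegral_sub_sq_le (by norm_num) _ _

theorem polyIntegral_derivative_recon_sq_le {p : ℕ} {v : ℝ[X]} (hv : v.natDegree ≤ p) :
    polyIntegral (-1) 1 (derivative (recon p v) ^ 2) ≤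
      ((p + 1) ^ 2) ^ 2 * polyIntegral (-1) 1 (v ^ 2) := by
  set N := polyIntegral (-1) 1 (v ^ 2)
  have hdeg : v.degree < (p + 1 : ℕ) :=
    (natDegree_le_iff_degree_le.mp hv).trans_lt (by exact_mod_cast p.lt_succ_self)
  have htrace := sq_eval_le_mul_polyIntegral_sq hdeg neg_one_sq
  have hinverse := polyIntegral_derivative_sq_le hdeg
  have hN : 0 ≤ N := polyIntegral_sq_nonneg (by norm_num) v
  push_cast at htrace hinverse
  calc polyIntegral (-1) 1 (derivative (recon p v) ^ 2)
      ≤ 2 * (polyIntegral (-1) 1 (derivative v ^ 2) + (p + 1) ^ 2 / 2 * v.eval (-1) ^ 2) :=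
        polyIntegral_derivative_recon_sq_le_add p v
    _ ≤ 2 * ((p + 1) ^ 2 * ((p + 1) ^ 2 - 1) / 4 * N +
          (p + 1) ^ 2 / 2 * ((p + 1) ^ 2 / 2 * N)) := by gcongr
    _ = ((p + 1) ^ 2) ^ 2 * N - (p + 1) ^ 2 / 2 * N := by ring
    _ ≤ ((p + 1) ^ 2) ^ 2 * N := sub_le_self _ (by positivity)

end InverseInequalities

/-- **Inverse inequality for the reconstruction.** There is a constant `C > 0`, independent
of `p`, such that for every `p ≥ 0` and every polynomial `v` of degree at most `p`,
`‖(I v)'‖_{L²(−1,1)} ≤ C (p+1)² ‖v‖_{L²(−1,1)}`. -/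
theorem recon_inverse_inequality :
    ∃ C : ℝ, 0 < C ∧ ∀ p : ℕ, ∀ v : Polynomial ℝ, v.natDegree ≤ p →
      Real.sqrt (∫ s in (-1 : ℝ)..1, ((Polynomial.derivative (recon p v)).eval s) ^ 2)
        ≤ C * ((p : ℝ) + 1) ^ 2 * Real.sqrt (∫ s in (-1 : ℝ)..1, (v.eval s) ^ 2) := by
  refine ⟨1, one_pos, fun p v hv => ?_⟩
  have h := Real.sqrt_le_sqrt (polyIntegral_derivative_recon_sq_le hv)
  rw [Real.sqrt_mul (by positivity), Real.sqrt_sq (by positivity)] at h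
  simpa only [polyIntegral_apply, eval_pow, one_mul] using h
end
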